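/- Let H be a real Hilbert space and f : H → ℝ be μ-strongly concave with L-Lipschitz (Fréchet) gradient over a closed convex set C. For an index set U and a family f_u of such functions whose gradients are L-Lipschitz in u, the argmax map u ↦ ζ_u := argmax_{ζ∈C} f_u(ζ) is (L/μ)-Lipschitz: ‖ζ_{u₁} − ζ_{u₂}‖ ≤ (L/μ)‖u₁ − u₂‖, where u ranges over a normed space and ‖∇f_{u₁}(ζ) − ∇f_{u₂}(ζ)‖ ≤ L‖u₁ − u₂‖ for all ζ ∈ C. -/

import Mathlib

/-!
Let `x₁` maximize `f₁` and `x₂` maximize `f₂` over `C`, with `f₁` strongly concave of modulus `μ`.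
Strong concavity is used twice: at the maximizer `x₁` it gives the quadratic growth
`f₁ x₂ + μ / 2 * ‖x₁ - x₂‖ ^ 2 ≤ f₁ x₁`, and at `x₂` the tangent bound
`f₁ x₁ + μ / 2 * ‖x₁ - x₂‖ ^ 2 ≤ f₁ x₂ + f₁' (x₁ - x₂)`, where `f₁'` and `f₂'` are the derivatives
at `x₂`. Adding them and using the optimality condition `f₂' (x₁ - x₂) ≤ 0` yields
`μ * ‖x₁ - x₂‖ ^ 2 ≤ (f₁' - f₂') (x₁ - x₂) ≤ ‖f₁' - f₂'‖ * ‖x₁ - x₂‖`.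
-/

open Filter Set Topology

section UniformConcave

variable {E : Type*} [NormedAddCommGroup E] [NormedSpace ℝ E]
  {C : Set E} {φ : ℝ → ℝ} {f : E → ℝ} {x y : E}

theorem uniformConcaveOn_sub_add_le_slope (hf : UniformConcaveOn C φ f) (hx : x ∈ C) (hy : y ∈ C)
    {t : ℝ} (ht : t ∈ Ioc 0 1) :
    f y - f x + (1 - t) * φ ‖x - y‖ ≤ t⁻¹ * (f (x + t • (y - x)) - f x) := by
  obtain ⟨ht_pos, ht_le⟩ := ht
  have hconc := hf.2 hx hy (sub_nonneg.2 ht_le) ht_pos.le (sub_add_cancel 1 t)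
  have hpoint : (1 - t) • x + t • y = x + t • (y - x) := by module
  rw [hpoint, smul_eq_mul, smul_eq_mul] at hconc
  rw [le_inv_mul_iff₀ ht_pos]
  linarith

theorem tendsto_add_one_sub_mul_nhdsGT_zero (a b : ℝ) :
    Tendsto (fun t : ℝ ↦ a + (1 - t) * b) (𝓝[>] 0) (𝓝 (a + b)) := by
  have hcont : Continuous fun t : ℝ ↦ a + (1 - t) * b := by fun_prop
  simpa using (hcont.tendsto 0).mono_left nhdsWithin_le_nhds

theorem tendsto_slope_segment_of_hasFDerivWithinAt {F : Type*} [NormedAddCommGroup F]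
    [NormedSpace ℝ F] {f : E → F} {f' : E →L[ℝ] F} (hC : Convex ℝ C)
    (hf' : HasFDerivWithinAt f f' C x) (hx : x ∈ C) (hy : y ∈ C) :
    Tendsto (fun t : ℝ ↦ t⁻¹ • (f (x + t • (y - x)) - f x)) (𝓝[>] 0) (𝓝 (f' (y - x))) := by
  refine hf'.lim (c := fun t ↦ t⁻¹) (d := fun t ↦ t • (y - x)) ?_ ?_ ?_
  · have hcont : Continuous fun t : ℝ ↦ t • (y - x) := by fun_prop
    simpa using (hcont.tendsto 0).mono_left nhdsWithin_le_nhds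
  · filter_upwards [Ioc_mem_nhdsGT zero_lt_one] with t ht
    exact hC.add_smul_sub_mem hx hy ⟨ht.1.le, ht.2⟩
  · refine tendsto_const_nhds.congr' ?_
    filter_upwards [self_mem_nhdsWithin] with t (ht : 0 < t)
    rw [inv_smul_smul₀ ht.ne']

theorem uniformConcaveOn_sub_add_le_of_hasFDerivWithinAt {f' : E →L[ℝ] ℝ}
    (hf : UniformConcaveOn C φ f) (hf' : HasFDerivWithinAt f f' C x) (hx : x ∈ C) (hy : y ∈ C) :
    f y - f x + φ ‖x - y‖ ≤ f' (y - x) := by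
  refine le_of_tendsto_of_tendsto (tendsto_add_one_sub_mul_nhdsGT_zero _ _)
    (tendsto_slope_segment_of_hasFDerivWithinAt hf.1 hf' hx hy) ?_
  filter_upwards [Ioc_mem_nhdsGT zero_lt_one] with t ht
  exact uniformConcaveOn_sub_add_le_slope hf hx hy ht

theorem uniformConcaveOn_sub_add_nonpos_of_isMaxOn (hf : UniformConcaveOn C φ f)
    (hmax : IsMaxOn f C x) (hx : x ∈ C) (hy : y ∈ C) :
    f y - f x + φ ‖x - y‖ ≤ 0 := by
  refine le_of_tendsto (tendsto_add_one_sub_mul_nhdsGT_zero _ _) ?_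
  filter_upwards [Ioc_mem_nhdsGT zero_lt_one] with t ht
  have hmem : x + t • (y - x) ∈ C := hf.1.add_smul_sub_mem hx hy ⟨ht.1.le, ht.2⟩
  exact (uniformConcaveOn_sub_add_le_slope hf hx hy ht).trans <|
    mul_nonpos_of_nonneg_of_nonpos (inv_nonneg.2 ht.1.le) (sub_nonpos.2 (hmax hmem))

end UniformConcave

section Perturbation

variable {E : Type*} [NormedAddCommGroup E] [NormedSpace ℝ E]
  {C : Set E} {f₁ f₂ : E → ℝ} {f₁' f₂' : E →L[ℝ] ℝ} {x₁ x₂ : E}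

theorem uniformConcaveOn_two_mul_modulus_le_of_isMaxOn {φ : ℝ → ℝ} (hf₁ : UniformConcaveOn C φ f₁)
    (hf₁' : HasFDerivWithinAt f₁ f₁' C x₂) (hf₂' : HasFDerivWithinAt f₂ f₂' C x₂)
    (hx₁ : x₁ ∈ C) (hx₂ : x₂ ∈ C) (hmax₁ : IsMaxOn f₁ C x₁) (hmax₂ : IsLocalMaxOn f₂ C x₂) :
    2 * φ ‖x₁ - x₂‖ ≤ ‖f₁' - f₂'‖ * ‖x₁ - x₂‖ := by
  have hgrowth := uniformConcaveOn_sub_add_nonpos_of_isMaxOn hf₁ hmax₁ hx₁ hx₂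
  have htangent := uniformConcaveOn_sub_add_le_of_hasFDerivWithinAt hf₁ hf₁' hx₂ hx₁
  rw [norm_sub_rev x₂ x₁] at htangent
  have hoptimal : f₂' (x₁ - x₂) ≤ 0 := hmax₂.hasFDerivWithinAt_nonpos hf₂'
    (sub_mem_posTangentConeAt_of_segment_subset (hf₁.1.segment_subset hx₂ hx₁))
  calc
    2 * φ ‖x₁ - x₂‖ ≤ f₁' (x₁ - x₂) := by linarith
    _ ≤ (f₁' - f₂') (x₁ - x₂) := by rw [sub_apply]; linarith
    _ ≤ ‖f₁' - f₂'‖ * ‖x₁ - x₂‖ := (le_abs_self _).trans ((f₁' - f₂').le_opNorm _)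

theorem strongConcaveOn_mul_norm_sub_le_of_isMaxOn {μ : ℝ} (hf₁ : StrongConcaveOn C μ f₁)
    (hf₁' : HasFDerivWithinAt f₁ f₁' C x₂) (hf₂' : HasFDerivWithinAt f₂ f₂' C x₂)
    (hx₁ : x₁ ∈ C) (hx₂ : x₂ ∈ C) (hmax₁ : IsMaxOn f₁ C x₁) (hmax₂ : IsLocalMaxOn f₂ C x₂) :
    μ * ‖x₁ - x₂‖ ≤ ‖f₁' - f₂'‖ := by
  have hquad :=
    uniformConcaveOn_two_mul_modulus_le_of_isMaxOn hf₁ hf₁' hf₂' hx₁ hx₂ hmax₁ hmax₂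
  rcases (norm_nonneg (x₁ - x₂)).eq_or_lt with hzero | hpos
  · rw [← hzero, mul_zero]
    exact norm_nonneg _
  · refine le_of_mul_le_mul_right ?_ hpos
    linarith

end Perturbation

theorem argmax_lipschitz_in_parameter_general
    {E : Type*} [NormedAddCommGroup E] [NormedSpace ℝ E] {U : Type*} [PseudoMetricSpace U]
    {C : Set E} {f : U → E → ℝ} {f' : U → E → E →L[ℝ] ℝ} {μ L : ℝ} (hμ : 0 < μ)
    (hconc : ∀ u, StrongConcaveOn C μ (f u))
    (hderiv : ∀ u, ∀ ζ ∈ C, HasFDerivWithinAt (f u) (f' u ζ) C ζ)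
    (hLip : ∀ u u', ∀ ζ ∈ C, ‖f' u ζ - f' u' ζ‖ ≤ L * dist u u')
    {ζm : U → E} (hζm : ∀ u, ζm u ∈ C ∧ IsMaxOn (f u) C (ζm u)) (u₁ u₂ : U) :
    ‖ζm u₁ - ζm u₂‖ ≤ L / μ * dist u₁ u₂ := by
  obtain ⟨hmem₁, hmax₁⟩ := hζm u₁
  obtain ⟨hmem₂, hmax₂⟩ := hζm u₂
  rw [div_mul_eq_mul_div, le_div_iff₀' hμ]
  exact (strongConcaveOn_mul_norm_sub_le_of_isMaxOn (hconc u₁) (hderiv u₁ _ hmem₂)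
    (hderiv u₂ _ hmem₂) hmem₁ hmem₂ hmax₁ hmax₂.localize).trans (hLip u₁ u₂ _ hmem₂)

theorem argmax_lipschitz_in_parameter
    {H : Type*} [NormedAddCommGroup H] [InnerProductSpace ℝ H] [CompleteSpace H]
    {U : Type*} [NormedAddCommGroup U] [NormedSpace ℝ U]
    (C : Set H) (hCne : C.Nonempty) (hCc : IsClosed C) (hCconv : Convex ℝ C)
    (f : U → H → ℝ) (g : U → H → H)
    (μ L : ℝ) (hμ : 0 < μ) (hL : 0 < L)
    (hconc : ∀ u : U, StrongConcaveOn C μ (f u))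
    (hgrad : ∀ (u : U) (ζ : H), HasGradientAt (f u) (g u ζ) ζ)
    (hLipζ : ∀ (u : U) (ζ ζ' : H), ‖g u ζ - g u ζ'‖ ≤ L * ‖ζ - ζ'‖)
    (hLipu : ∀ (u u' : U) (ζ : H), ζ ∈ C → ‖g u ζ - g u' ζ‖ ≤ L * ‖u - u'‖)
    (ζm : U → H)
    (hζm : ∀ u : U, ζm u ∈ C ∧ IsMaxOn (f u) C (ζm u)) :
    ∀ u₁ u₂ : U, ‖ζm u₁ - ζm u₂‖ ≤ (L / μ) * ‖u₁ - u₂‖ := by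
  simpa only [dist_eq_norm] using argmax_lipschitz_in_parameter_general hμ hconc
    (fun u ζ _ ↦ (hgrad u ζ).hasFDerivAt.hasFDerivWithinAt)
    (by simpa only [← map_sub, LinearIsometryEquiv.norm_map, dist_eq_norm] using hLipu) hζm
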